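/- arXiv:2305.13797 — 5 statements merged into one kernel-verified Lean document; each statement's English description precedes it below -/
import Mathlib

section
/- Let n ≥ 2, let ξ be a real number with 1 ≤ ξ ≤ n−1, and let C ∈ ℝ^{n×n} be a matrix none of whose rows is constant. Suppose ε ∈ ℝⁿ has all entries positive and the matrix P defined by P_ij = exp(−C_ij/ε_i) / ∑_ℓ exp(−C_iℓ/ε_i) satisfies H(P_{i:}) = log ξ + 1 for every row i. Then P belongs to H_ξ and is the unique minimizer of the linear functional P ↦ ⟨P, C⟩ over H_ξ. -/
open Finset

/-- Entropy of a nonnegative vector, with the convention `0 * log 0 = 0`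
(which holds since `Real.log 0 = 0` in Mathlib). -/
noncomputable def ent {n : ℕ} (p : Fin n → ℝ) : ℝ :=
  -∑ i, p i * (Real.log (p i) - 1)

/-- Membership in the set `H_ξ`: nonnegative entries, unit row sums, and
row-wise entropy at least `log ξ + 1`. -/
def Hxi {n : ℕ} (ξ : ℝ) (P : Fin n → Fin n → ℝ) : Prop :=
  (∀ i j, 0 ≤ P i j) ∧ (∀ i, ∑ j, P i j = 1) ∧ (∀ i, Real.log ξ + 1 ≤ ent (P i))

/-- Frobenius inner product. -/
noncomputable def frob {n : ℕ} (P C : Fin n → Fin n → ℝ) : ℝ :=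
  ∑ i, ∑ j, P i j * C i j

/-!
For a probability vector `q` and the Gibbs distribution `p` of a cost `c` at temperature `ε`, with
partition function `Z`, expanding `log p = -c / ε - log Z` gives the variational identity
`⟨q, c⟩ = ε (H q + KL (q ‖ p)) - ε (1 + log Z)`. Taking the difference with the case `q = p`, if `q`
has at least the entropy of `p`, then `⟨q, c⟩` exceeds `⟨p, c⟩` by at least `ε KL (q ‖ p)`, which is
nonnegative and vanishes only at `q = p`. Both the constraints and the objective decouple into rows.
-/

section Entropy

open InformationTheory

variable {κ : Type*} [Fintype κ] {p q : κ → ℝ}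

/-- The entropy `ent` for vectors indexed by an arbitrary finite type. -/
noncomputable def entropy (p : κ → ℝ) : ℝ :=
  -∑ j, p j * (Real.log (p j) - 1)

/-- The Kullback–Leibler divergence `KL (q ‖ p)` of nonnegative vectors, not necessarily of equal
total mass. Since `q j / 0 = 0`, it is meaningful only where `p j = 0` implies `q j = 0`. -/
noncomputable def relEntropy (q p : κ → ℝ) : ℝ :=
  ∑ j, p j * klFun (q j / p j)

lemma mul_klFun_div_nonneg {x y : ℝ} (hx : 0 ≤ x) (hy : 0 ≤ y) : 0 ≤ y * klFun (x / y) :=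
  mul_nonneg hy (klFun_nonneg (div_nonneg hx hy))

lemma relEntropy_nonneg (hq : ∀ j, 0 ≤ q j) (hp : ∀ j, 0 ≤ p j) : 0 ≤ relEntropy q p :=
  Finset.sum_nonneg fun j _ => mul_klFun_div_nonneg (hq j) (hp j)

lemma relEntropy_eq_zero_iff (hq : ∀ j, 0 ≤ q j) (hp : ∀ j, 0 < p j) :
    relEntropy q p = 0 ↔ q = p := by
  have term_eq_zero_iff (j : κ) : p j * klFun (q j / p j) = 0 ↔ q j = p j := by
    rw [mul_eq_zero_iff_left (hp j).ne', klFun_eq_zero_iff (div_nonneg (hq j) (hp j).le),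
      div_eq_one_iff_eq (hp j).ne']
  rw [relEntropy, Finset.sum_eq_zero_iff_of_nonneg fun j _ => mul_klFun_div_nonneg (hq j) (hp j).le]
  simp only [Finset.mem_univ, forall_const, term_eq_zero_iff, funext_iff]

lemma mul_klFun_div {x y : ℝ} (hy : y ≠ 0) :
    y * klFun (x / y) = y - x * Real.log y + x * (Real.log x - 1) := by
  rcases eq_or_ne x 0 with rfl | hx
  · rw [zero_div, klFun_zero]
    ring
  · rw [klFun, Real.log_div hx hy]
    field_simp
    ring

lemma relEntropy_eq_sub_entropy (hp : ∀ j, p j ≠ 0) :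
    relEntropy q p = ∑ j, p j - ∑ j, q j * Real.log (p j) - entropy q := by
  simp only [relEntropy, entropy, mul_klFun_div (hp _), Finset.sum_add_distrib,
    Finset.sum_sub_distrib, sub_neg_eq_add]

end Entropy

section Gibbs

variable {κ : Type*} [Fintype κ] {c q : κ → ℝ} {ε : ℝ}

/-- The partition function of the cost `c` at temperature `ε`: the normalizing constant of the
Gibbs distribution. -/
noncomputable def partitionFunction (c : κ → ℝ) (ε : ℝ) : ℝ :=
  ∑ l, Real.exp (-c l / ε)

/-- The Gibbs distribution of the cost `c` at temperature `ε`; the rows of an entropic affinity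
matrix are of this form. -/
noncomputable def gibbs (c : κ → ℝ) (ε : ℝ) (j : κ) : ℝ :=
  Real.exp (-c j / ε) / partitionFunction c ε

lemma partitionFunction_pos [Nonempty κ] (c : κ → ℝ) (ε : ℝ) : 0 < partitionFunction c ε :=
  Finset.sum_pos (fun _ _ => Real.exp_pos _) Finset.univ_nonempty

lemma gibbs_pos (c : κ → ℝ) (ε : ℝ) (j : κ) : 0 < gibbs c ε j :=
  have : Nonempty κ := ⟨j⟩
  div_pos (Real.exp_pos _) (partitionFunction_pos c ε)

lemma sum_gibbs [Nonempty κ] (c : κ → ℝ) (ε : ℝ) : ∑ j, gibbs c ε j = 1 := by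
  simp only [gibbs, ← Finset.sum_div]
  exact div_self (partitionFunction_pos c ε).ne'

lemma gibbs_mem_stdSimplex [Nonempty κ] (c : κ → ℝ) (ε : ℝ) : gibbs c ε ∈ stdSimplex ℝ κ :=
  ⟨fun j => (gibbs_pos c ε j).le, sum_gibbs c ε⟩

lemma log_gibbs (c : κ → ℝ) (ε : ℝ) (j : κ) :
    Real.log (gibbs c ε j) = -c j / ε - Real.log (partitionFunction c ε) := by
  have : Nonempty κ := ⟨j⟩
  rw [gibbs, Real.log_div (Real.exp_pos _).ne' (partitionFunction_pos c ε).ne', Real.log_exp]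

lemma sum_mul_log_gibbs (hq : ∑ j, q j = 1) :
    ∑ j, q j * Real.log (gibbs c ε j) = -(q ⬝ᵥ c) / ε - Real.log (partitionFunction c ε) := by
  simp only [log_gibbs, mul_sub, Finset.sum_sub_distrib, ← Finset.sum_mul, hq, one_mul, dotProduct,
    mul_div_assoc', ← Finset.sum_div, mul_neg, Finset.sum_neg_distrib]

lemma nonempty_of_sum_eq_one (hq : ∑ j, q j = 1) : Nonempty κ :=
  Finset.univ_nonempty_iff.1 (Finset.nonempty_of_sum_ne_zero (hq ▸ one_ne_zero))

lemma gibbs_variational_identity (hε : ε ≠ 0) (hq : ∑ j, q j = 1) :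
    q ⬝ᵥ c = ε * (entropy q + relEntropy q (gibbs c ε)) -
      ε * (1 + Real.log (partitionFunction c ε)) := by
  have := nonempty_of_sum_eq_one hq
  rw [relEntropy_eq_sub_entropy fun j => (gibbs_pos c ε j).ne', sum_gibbs, sum_mul_log_gibbs hq]
  field_simp
  ring

lemma gibbs_dotProduct_add_relEntropy_le (hε : 0 < ε) (hq : ∑ j, q j = 1)
    (hent : entropy (gibbs c ε) ≤ entropy q) :
    gibbs c ε ⬝ᵥ c + ε * relEntropy q (gibbs c ε) ≤ q ⬝ᵥ c := by
  have := nonempty_of_sum_eq_one hq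
  have hself : relEntropy (gibbs c ε) (gibbs c ε) = 0 :=
    (relEntropy_eq_zero_iff (fun j => (gibbs_pos c ε j).le) (gibbs_pos c ε)).2 rfl
  rw [gibbs_variational_identity hε.ne' (sum_gibbs c ε), gibbs_variational_identity hε.ne' hq,
    hself]
  linarith [mul_le_mul_of_nonneg_left hent hε.le]

lemma gibbs_dotProduct_le (hε : 0 < ε) (hq : q ∈ stdSimplex ℝ κ)
    (hent : entropy (gibbs c ε) ≤ entropy q) : gibbs c ε ⬝ᵥ c ≤ q ⬝ᵥ c := by
  have hKL := relEntropy_nonneg hq.1 fun j => (gibbs_pos c ε j).le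
  exact (le_add_of_nonneg_right (mul_nonneg hε.le hKL)).trans
    (gibbs_dotProduct_add_relEntropy_le hε hq.2 hent)

lemma eq_gibbs_of_dotProduct_le (hε : 0 < ε) (hq : q ∈ stdSimplex ℝ κ)
    (hent : entropy (gibbs c ε) ≤ entropy q) (hle : q ⬝ᵥ c ≤ gibbs c ε ⬝ᵥ c) :
    q = gibbs c ε := by
  have hKL := relEntropy_nonneg hq.1 fun j => (gibbs_pos c ε j).le
  have hgap : ε * relEntropy q (gibbs c ε) ≤ 0 := by
    linarith [gibbs_dotProduct_add_relEntropy_le hε hq.2 hent]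
  exact (relEntropy_eq_zero_iff hq.1 (gibbs_pos c ε)).1
    ((nonpos_of_mul_nonpos_right hgap hε).antisymm hKL)

end Gibbs

section RowEntropy

variable {ι κ : Type*} [Fintype κ]

/-- The matrices with probability vectors as rows, the `i`-th row having entropy at least `h i`.
This is `H_ξ` with a threshold `h i` for each row in place of `log ξ + 1`. -/
def rowEntropySet (h : ι → ℝ) : Set (ι → κ → ℝ) :=
  {P | ∀ i, P i ∈ stdSimplex ℝ κ ∧ h i ≤ entropy (P i)}

lemma hxi_iff_mem_rowEntropySet {n : ℕ} {ξ : ℝ} {P : Fin n → Fin n → ℝ} :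
    Hxi ξ P ↔ P ∈ rowEntropySet fun _ => Real.log ξ + 1 :=
  ⟨fun ⟨nonneg, sum_one, entropy_ge⟩ i => ⟨⟨nonneg i, sum_one i⟩, entropy_ge i⟩,
    fun h => ⟨fun i => (h i).1.1, fun i => (h i).1.2, fun i => (h i).2⟩⟩

theorem entropic_affinity_is_unique_minimizer_general [Fintype ι] [Nonempty κ] {h : ι → ℝ}
    (C : ι → κ → ℝ) {ε : ι → ℝ} (hε : ∀ i, 0 < ε i) {P : ι → κ → ℝ}
    (hP : ∀ i, P i = gibbs (C i) (ε i)) (hent : ∀ i, entropy (P i) = h i) :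
    P ∈ rowEntropySet h ∧
      (∀ Q ∈ rowEntropySet h, ∑ i, P i ⬝ᵥ C i ≤ ∑ i, Q i ⬝ᵥ C i) ∧
      (∀ Q ∈ rowEntropySet h, ∑ i, Q i ⬝ᵥ C i = ∑ i, P i ⬝ᵥ C i → Q = P) := by
  obtain rfl : P = fun i => gibbs (C i) (ε i) := funext hP
  obtain rfl : (fun i => entropy (gibbs (C i) (ε i))) = h := funext hent
  have row_le {Q} (hQ : Q ∈ rowEntropySet fun i => entropy (gibbs (C i) (ε i))) (i : ι) :
      gibbs (C i) (ε i) ⬝ᵥ C i ≤ Q i ⬝ᵥ C i :=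
    gibbs_dotProduct_le (hε i) (hQ i).1 (hQ i).2
  refine ⟨fun i => ⟨gibbs_mem_stdSimplex (C i) (ε i), le_rfl⟩,
    fun Q hQ => Finset.sum_le_sum fun i _ => row_le hQ i, fun Q hQ hQP => funext fun i => ?_⟩
  have row_eq := (Finset.sum_eq_sum_iff_of_le fun i _ => row_le hQ i).1 hQP.symm i
    (Finset.mem_univ i)
  exact eq_gibbs_of_dotProduct_le (hε i) (hQ i).1 (hQ i).2 row_eq.ge

end RowEntropy

theorem entropic_affinity_is_unique_minimizer
    {n : ℕ} (hn : 2 ≤ n) (ξ : ℝ) (hξ1 : 1 ≤ ξ) (hξ2 : ξ ≤ (n : ℝ) - 1)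
    (C : Fin n → Fin n → ℝ) (hC : ∀ i, ∃ j k, C i j ≠ C i k)
    (ε : Fin n → ℝ) (hε : ∀ i, 0 < ε i)
    (P : Fin n → Fin n → ℝ)
    (hP : ∀ i j, P i j = Real.exp (-C i j / ε i) / ∑ l, Real.exp (-C i l / ε i))
    (hent : ∀ i, ent (P i) = Real.log ξ + 1) :
    Hxi ξ P ∧ (∀ Q, Hxi ξ Q → frob P C ≤ frob Q C) ∧
      (∀ Q, Hxi ξ Q → frob Q C = frob P C → Q = P) := by
  have : NeZero n := ⟨by lia⟩
  simp only [hxi_iff_mem_rowEntropySet]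
  exact entropic_affinity_is_unique_minimizer_general C hε (fun i => funext (hP i)) hent
end

section
/- Let n ≥ 2, let ξ be a real number with 1 ≤ ξ ≤ n−1, and let C ∈ ℝ^{n×n} be symmetric with nonnegative entries and C_ij = 0 iff i = j. Suppose P ∈ H_ξ ∩ S has all entries positive, and there exist γ ∈ ℝⁿ with nonnegative entries, λ ∈ ℝⁿ, and Γ ∈ ℝ^{n×n} such that the stationarity condition C_ij + γ_i log P_ij − λ_i + Γ_ij − Γ_ji = 0 holds for all i, j, and the complementary slackness condition γ_i (H(P_{i:}) − (log ξ + 1)) = 0 holds for all i. Then γ_i > 0 for at least n−1 indices i ∈ {1,…,n}. -/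
open Finset

/-! Summing the stationarity conditions at `(i, j)` and `(j, i)` eliminates the multiplier `Γ` of
the symmetry constraint, and so does restricting to the diagonal. If `γ i = γ j = 0`, the logarithms
vanish too: the diagonal gives `λ i = C i i` and `λ j = C j j`, and the sum then reads
`C i j + C j i = C i i + C j j`, which for a symmetric cost vanishing exactly on the diagonal forces
`i = j`. -/

/-- Stationarity of the Lagrangian with cost `C`, entropy multipliers `γ`, row-sum multipliers `lam`
and symmetry multiplier `Γ`. The matrix `L` stands for the entrywise logarithm of the primal
variable. -/
def IsKKTStationary {ι R : Type*} [Ring R] (C : ι → ι → R) (γ : ι → R) (L : ι → ι → R)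
    (lam : ι → R) (Γ : ι → ι → R) : Prop :=
  ∀ i j, C i j + γ i * L i j - lam i + Γ i j - Γ j i = 0

namespace IsKKTStationary

variable {ι R : Type*} [Ring R] {C L Γ : ι → ι → R} {γ lam : ι → R}

theorem diag_eq (h : IsKKTStationary C γ L lam Γ) (i : ι) : C i i + γ i * L i i = lam i := by
  rw [← sub_eq_zero, ← h i i]
  abel

theorem add_swap_eq (h : IsKKTStationary C γ L lam Γ) (i j : ι) :
    (C i j + γ i * L i j) + (C j i + γ j * L j i) = lam i + lam j :=
  calc (C i j + γ i * L i j) + (C j i + γ j * L j i)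
      = (C i j + γ i * L i j - lam i + Γ i j - Γ j i)
          + (C j i + γ j * L j i - lam j + Γ j i - Γ i j) + (lam i + lam j) := by abel
    _ = lam i + lam j := by rw [h i j, h j i, add_zero, zero_add]

theorem cost_add_swap_eq_of_eq_zero (h : IsKKTStationary C γ L lam Γ) {i j : ι}
    (hi : γ i = 0) (hj : γ j = 0) : C i j + C j i = C i i + C j j := by
  have hlam_i : C i i = lam i := by simpa [hi] using h.diag_eq i
  have hlam_j : C j j = lam j := by simpa [hj] using h.diag_eq j
  simpa [hi, hj, hlam_i, hlam_j] using h.add_swap_eq i j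

theorem subsingleton_setOf_eq_zero (h : IsKKTStationary C γ L lam Γ)
    (hC : ∀ i j, i ≠ j → C i j + C j i ≠ C i i + C j j) : {i | γ i = 0}.Subsingleton :=
  fun i hi j hj => not_imp_not.1 (hC i j) (h.cost_add_swap_eq_of_eq_zero hi hj)

end IsKKTStationary

theorem sea_dual_variables_positive_general {ι R : Type*} [Nonempty ι] [Ring R] [PartialOrder R]
    {C L Γ : ι → ι → R} {γ lam : ι → R} (hC : ∀ i j, i ≠ j → C i j + C j i ≠ C i i + C j j)
    (hγ : ∀ i, 0 ≤ γ i) (hstat : IsKKTStationary C γ L lam Γ) :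
    ∃ i₀, ∀ i, i ≠ i₀ → 0 < γ i := by
  obtain ⟨i₀, hi₀⟩ : ∃ i₀, {i | γ i = 0} ⊆ {i₀} := by
    obtain hempty | ⟨i₀, hsingle⟩ := (hstat.subsingleton_setOf_eq_zero hC).eq_empty_or_singleton
    · exact ⟨Classical.arbitrary ι, hempty ▸ Set.empty_subset _⟩
    · exact ⟨i₀, hsingle.subset⟩
  exact ⟨i₀, fun i hi => (hγ i).lt_of_ne' fun hγi => hi (hi₀ hγi)⟩

/-- For KKT points of the SEA problem, at least `n - 1` of the dual variables
`γ_i` associated with the entropy constraints are positive. -/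
theorem sea_dual_variables_positive
    {n : ℕ} (hn : 2 ≤ n) (ξ : ℝ) (hξ1 : 1 ≤ ξ) (hξ2 : ξ ≤ (n : ℝ) - 1)
    (C : Fin n → Fin n → ℝ) (hCsym : ∀ i j, C i j = C j i)
    (hCnn : ∀ i j, 0 ≤ C i j) (hCzero : ∀ i j, C i j = 0 ↔ i = j)
    (P : Fin n → Fin n → ℝ) (hP : Hxi ξ P) (hPsym : ∀ i j, P i j = P j i)
    (hPpos : ∀ i j, 0 < P i j)
    (γ : Fin n → ℝ) (hγ : ∀ i, 0 ≤ γ i) (lam : Fin n → ℝ) (Γ : Fin n → Fin n → ℝ)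
    (hstat : ∀ i j, C i j + γ i * Real.log (P i j) - lam i + Γ i j - Γ j i = 0)
    (hslack : ∀ i, γ i * (ent (P i) - (Real.log ξ + 1)) = 0) :
    ∃ i₀ : Fin n, ∀ i : Fin n, i ≠ i₀ → 0 < γ i := by
  have : Nonempty (Fin n) := ⟨0, by omega⟩
  refine sea_dual_variables_positive_general (L := fun i j => Real.log (P i j))
    (fun i j hij hC => hij ((hCzero i j).1 ?_)) hγ hstat
  linarith [hCsym i j, (hCzero i i).2 rfl, (hCzero j j).2 rfl]
end

section
/- Let n ≥ 2, let ξ be a real number with 1 ≤ ξ ≤ n−1, and let C ∈ ℝ^{n×n} be symmetric with nonnegative entries and C_ij = 0 iff i = j. Suppose P ∈ H_ξ ∩ S has all entries positive, and there exist γ ∈ ℝⁿ with all entries positive, λ ∈ ℝⁿ, and Γ ∈ ℝ^{n×n} such that C_ij + γ_i log P_ij − λ_i + Γ_ij − Γ_ji = 0 for all i, j, and γ_i (H(P_{i:}) − (log ξ + 1)) = 0 for all i. Then H(P_{i:}) = log ξ + 1 for every i, and P_ij = exp((λ_i + λ_j − 2 C_ij)/(γ_i + γ_j)) for all i, j. 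-/
open Finset

/-- Summing the equations at `(i, j)` and `(j, i)` cancels `Γ`, the multiplier of the symmetry
constraint. -/
lemma add_mul_eq_of_stationary {ι R : Type*} [CommRing R] {C L Γ : ι → ι → R} {γ lam : ι → R}
    (hC : ∀ i j, C i j = C j i) (hL : ∀ i j, L i j = L j i)
    (hstat : ∀ i j, C i j + γ i * L i j - lam i + Γ i j - Γ j i = 0) (i j : ι) :
    (γ i + γ j) * L i j = lam i + lam j - 2 * C i j := by
  have hji : C i j + γ j * L i j - lam j + Γ j i - Γ i j = 0 := by
    simpa only [hC j i, hL j i] using hstat j i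
  linear_combination hstat i j + hji

lemma eq_exp_div_of_mul_log_eq {a b x : ℝ} (ha : a ≠ 0) (hx : 0 < x)
    (h : a * Real.log x = b) : x = Real.exp (b / a) := by
  rw [← h, mul_div_cancel_left₀ _ ha, Real.exp_log hx]

theorem sea_form_when_gamma_positive_general
    {n : ℕ} (h : Fin n → ℝ) (C : Fin n → Fin n → ℝ) (hCsym : ∀ i j, C i j = C j i)
    (P : Fin n → Fin n → ℝ) (hPsym : ∀ i j, P i j = P j i) (hPpos : ∀ i j, 0 < P i j)
    (γ : Fin n → ℝ) (hγ : ∀ i j, γ i + γ j ≠ 0) (lam : Fin n → ℝ) (Γ : Fin n → Fin n → ℝ)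
    (hstat : ∀ i j, C i j + γ i * Real.log (P i j) - lam i + Γ i j - Γ j i = 0)
    (hslack : ∀ i, γ i * (ent (P i) - h i) = 0) :
    (∀ i, ent (P i) = h i) ∧
      ∀ i j, P i j = Real.exp ((lam i + lam j - 2 * C i j) / (γ i + γ j)) := by
  refine ⟨fun i => ?_, fun i j => ?_⟩
  · have hγi : γ i ≠ 0 := fun h0 => hγ i i (by simp [h0])
    exact sub_eq_zero.mp ((mul_eq_zero.mp (hslack i)).resolve_left hγi)
  · have hlogsym : ∀ i j, Real.log (P i j) = Real.log (P j i) :=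
      fun i j => congrArg Real.log (hPsym i j)
    exact eq_exp_div_of_mul_log_eq (hγ i j) (hPpos i j)
      (add_mul_eq_of_stationary hCsym hlogsym hstat i j)

theorem sea_form_when_gamma_positive
    {n : ℕ} (hn : 2 ≤ n) (ξ : ℝ) (hξ1 : 1 ≤ ξ) (hξ2 : ξ ≤ (n : ℝ) - 1)
    (C : Fin n → Fin n → ℝ) (hCsym : ∀ i j, C i j = C j i)
    (hCnn : ∀ i j, 0 ≤ C i j) (hCzero : ∀ i j, C i j = 0 ↔ i = j)
    (P : Fin n → Fin n → ℝ) (hP : Hxi ξ P) (hPsym : ∀ i j, P i j = P j i)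
    (hPpos : ∀ i j, 0 < P i j)
    (γ : Fin n → ℝ) (hγ : ∀ i, 0 < γ i) (lam : Fin n → ℝ) (Γ : Fin n → Fin n → ℝ)
    (hstat : ∀ i j, C i j + γ i * Real.log (P i j) - lam i + Γ i j - Γ j i = 0)
    (hslack : ∀ i, γ i * (ent (P i) - (Real.log ξ + 1)) = 0) :
    (∀ i, ent (P i) = Real.log ξ + 1) ∧
      ∀ i j, P i j = Real.exp ((lam i + lam j - 2 * C i j) / (γ i + γ j)) :=
  sea_form_when_gamma_positive_general (fun _ => Real.log ξ + 1) C hCsym P hPsym hPpos γ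
    (fun i j => (add_pos (hγ i) (hγ j)).ne') lam Γ hstat hslack
end

section
/- Let n ≥ 1 and let K ∈ ℝ^{n×n} have all entries positive. The unique minimizer of P ↦ KL(P|K) over symmetric matrices P ∈ ℝ^{n×n} with nonnegative entries is the matrix P* with entries P*_ij = √(K_ij · K_ji) (the entrywise geometric mean of K and Kᵀ). -/
open Finset

/-- Kullback–Leibler divergence between entrywise-nonnegative matrices,
with the convention `0 * log 0 = 0`. -/
noncomputable def klDiv {n : ℕ} (P K : Fin n → Fin n → ℝ) : ℝ :=
  ∑ i, ∑ j, P i j * (Real.log (P i j / K i j) - 1)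

/-!
For symmetric `P`, transposing the index pair shows that `KL(P|K) = KL(P|Kᵀ)`. The average of the
two depends on `K` only through `(log K + log Kᵀ) / 2`, the logarithm of the entrywise geometric
mean `S` of `K` and `Kᵀ`, so `KL(P|K) = KL(P|S)`. Since `S` is itself symmetric, projecting `K` onto
the symmetric matrices amounts to minimizing `KL(·|S)` over all nonnegative matrices, and Gibbs'
inequality says that the unique minimizer is `S`.
-/

open Function (swap)
open InformationTheory (klFun klFun_nonneg klFun_eq_zero_iff)

section Gibbs

lemma mul_log_div_sub_one_eq_klFun (p : ℝ) {s : ℝ} (hs : s ≠ 0) :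
    p * (Real.log (p / s) - 1) = s * klFun (p / s) - s := by
  rw [InformationTheory.klFun_apply]
  field_simp
  ring

lemma mul_klFun_div_nonneg_s10 {p s : ℝ} (hp : 0 ≤ p) (hs : 0 ≤ s) : 0 ≤ s * klFun (p / s) :=
  mul_nonneg hs (klFun_nonneg (div_nonneg hp hs))

lemma mul_klFun_div_eq_zero_iff {p s : ℝ} (hp : 0 ≤ p) (hs : 0 < s) :
    s * klFun (p / s) = 0 ↔ p = s := by
  rw [mul_eq_zero_iff_left hs.ne', klFun_eq_zero_iff (div_nonneg hp hs.le),
    div_eq_one_iff_eq hs.ne']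

variable {n : ℕ} {P S : Fin n → Fin n → ℝ}

variable (P) in
lemma klDiv_sub_klDiv_self (hS : ∀ i j, S i j ≠ 0) :
    klDiv P S - klDiv S S = ∑ i, ∑ j, S i j * klFun (P i j / S i j) := by
  simp only [klDiv, ← sum_sub_distrib]
  refine sum_congr rfl fun i _ => sum_congr rfl fun j _ => ?_
  rw [mul_log_div_sub_one_eq_klFun _ (hS i j), div_self (hS i j), Real.log_one]
  ring

lemma klDiv_self_le (hP : ∀ i j, 0 ≤ P i j) (hS : ∀ i j, 0 < S i j) :
    klDiv S S ≤ klDiv P S := by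
  rw [← sub_nonneg, klDiv_sub_klDiv_self P fun i j => (hS i j).ne']
  exact sum_nonneg fun i _ => sum_nonneg fun j _ =>
    mul_klFun_div_nonneg_s10 (hP i j) (hS i j).le

lemma klDiv_eq_klDiv_self_iff (hP : ∀ i j, 0 ≤ P i j) (hS : ∀ i j, 0 < S i j) :
    klDiv P S = klDiv S S ↔ P = S := by
  have hterm (i j) : 0 ≤ S i j * klFun (P i j / S i j) :=
    mul_klFun_div_nonneg_s10 (hP i j) (hS i j).le
  rw [← sub_eq_zero, klDiv_sub_klDiv_self P fun i j => (hS i j).ne',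
    sum_eq_zero_iff_of_nonneg fun i _ => sum_nonneg fun j _ => hterm i j]
  simp only [sum_eq_zero_iff_of_nonneg fun j _ => hterm _ j,
    mul_klFun_div_eq_zero_iff (hP _ _) (hS _ _), mem_univ, forall_const, funext_iff]

end Gibbs

section GeomMean

/-- The entrywise geometric mean of two real matrices, through which the divergences of a matrix
from both of them are averaged. It is meant for nonnegative entries: `Real.sqrt` is `0` wherever the
product is negative. -/
noncomputable def geomMean {m n : Type*} (K L : m → n → ℝ) : m → n → ℝ :=
  fun i j => Real.sqrt (K i j * L i j)

lemma geomMean_pos {m n : Type*} {K L : m → n → ℝ} (hK : ∀ i j, 0 < K i j)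
    (hL : ∀ i j, 0 < L i j) (i : m) (j : n) : 0 < geomMean K L i j :=
  Real.sqrt_pos.2 (mul_pos (hK i j) (hL i j))

lemma geomMean_swap_symm {n : Type*} (K : n → n → ℝ) (i j : n) :
    geomMean K (swap K) i j = geomMean K (swap K) j i :=
  congrArg Real.sqrt (mul_comm (K i j) (K j i))

lemma mul_log_div_add_mul_log_div (p : ℝ) {a b : ℝ} (ha : 0 < a) (hb : 0 < b) :
    p * Real.log (p / a) + p * Real.log (p / b) = 2 * (p * Real.log (p / Real.sqrt (a * b))) := by
  rcases eq_or_ne p 0 with rfl | hp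
  · simp
  · have hab : 0 < a * b := mul_pos ha hb
    rw [Real.log_div hp ha.ne', Real.log_div hp hb.ne', Real.log_div hp (Real.sqrt_pos.2 hab).ne',
      Real.log_sqrt hab.le, Real.log_mul ha.ne' hb.ne']
    ring

variable {n : ℕ} {P K L : Fin n → Fin n → ℝ}

variable (P) in
lemma klDiv_add_klDiv (hK : ∀ i j, 0 < K i j) (hL : ∀ i j, 0 < L i j) :
    klDiv P K + klDiv P L = 2 * klDiv P (geomMean K L) := by
  simp only [klDiv, geomMean, mul_sum, ← sum_add_distrib]
  refine sum_congr rfl fun i _ => sum_congr rfl fun j _ => ?_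
  linear_combination mul_log_div_add_mul_log_div (P i j) (hK i j) (hL i j)

variable (P K) in
lemma klDiv_swap_swap : klDiv (swap P) (swap K) = klDiv P K :=
  sum_comm

lemma klDiv_eq_klDiv_geomMean_swap (hP : ∀ i j, P i j = P j i) (hK : ∀ i j, 0 < K i j) :
    klDiv P K = klDiv P (geomMean K (swap K)) := by
  have hswap : klDiv P (swap K) = klDiv P K := by
    rw [← klDiv_swap_swap P K, show swap P = P from funext₂ fun i j => hP j i]
  linarith [klDiv_add_klDiv P hK fun i j => hK j i]

end GeomMean

theorem kl_projection_onto_symmetric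
    {n : ℕ} (hn : 1 ≤ n) (K : Fin n → Fin n → ℝ) (hK : ∀ i j, 0 < K i j) :
    let Pstar : Fin n → Fin n → ℝ := fun i j => Real.sqrt (K i j * K j i)
    (∀ i j, Pstar i j = Pstar j i) ∧ (∀ i j, 0 ≤ Pstar i j) ∧
      (∀ P : Fin n → Fin n → ℝ, (∀ i j, P i j = P j i) → (∀ i j, 0 ≤ P i j) →
        klDiv Pstar K ≤ klDiv P K) ∧
      (∀ P : Fin n → Fin n → ℝ, (∀ i j, P i j = P j i) → (∀ i j, 0 ≤ P i j) →
        klDiv P K = klDiv Pstar K → P = Pstar) := by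
  intro Pstar
  have hsymm : ∀ i j, Pstar i j = Pstar j i := geomMean_swap_symm K
  have hpos : ∀ i j, 0 < Pstar i j := geomMean_pos hK fun i j => hK j i
  have hred {P : Fin n → Fin n → ℝ} (hP : ∀ i j, P i j = P j i) : klDiv P K = klDiv P Pstar :=
    klDiv_eq_klDiv_geomMean_swap hP hK
  refine ⟨hsymm, fun i j => (hpos i j).le, fun P hP hP0 => ?_, fun P hP hP0 heq => ?_⟩
  · rw [hred hsymm, hred hP]
    exact klDiv_self_le hP0 hpos
  · rw [hred hsymm, hred hP] at heq
    exact (klDiv_eq_klDiv_self_iff hP0 hpos).1 heq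
end

section
/- Let n ≥ 2, let C ∈ ℝ^{n×n} be symmetric with nonnegative entries and C_ij = 0 iff i = j, let ν > 0 and f ∈ ℝⁿ, and define P ∈ ℝ^{n×n} by P_ij = exp((f_i + f_j − C_ij)/ν). Suppose P has unit row sums. Then P is symmetric and minimizes ⟨Q, C⟩ over all symmetric matrices Q ∈ ℝ^{n×n} with nonnegative entries, unit row sums, and total entropy ∑_i H(Q_{i:}) ≥ ∑_i H(P_{i:}). -/
open Finset

/-!
The entropy `H` is concave with gradient `-log p`. Write `f ⊕ g` for the matrix with entries
`f i + g j`. At `P = exp ((f ⊕ g - C) / ν)` the gradient of the total entropy is `(C - f ⊕ g) / ν`,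
and `f ⊕ g` pairs to zero with the difference of two plans having the same marginals, so the
gradient inequality bounds `ν * (H Q - H P)` by `⟨Q, C⟩ - ⟨P, C⟩`.
-/

lemma sub_le_mul_log_sub_log {p q : ℝ} (hp : 0 < p) (hq : 0 ≤ q) :
    q - p ≤ q * (Real.log q - Real.log p) := by
  rcases hq.eq_or_lt with rfl | hq_pos
  · simpa using hp.le
  · calc q - p = q * (1 - (q / p)⁻¹) := by field_simp
      _ ≤ q * Real.log (q / p) := by
        gcongr
        exact Real.one_sub_inv_le_log_of_pos (div_pos hq_pos hp)
      _ = q * (Real.log q - Real.log p) := by rw [Real.log_div hq_pos.ne' hp.ne']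

lemma ent_sub_ent_le_sum_sub_mul_log {n : ℕ} {p q : Fin n → ℝ}
    (hp : ∀ i, 0 < p i) (hq : ∀ i, 0 ≤ q i) :
    ent q - ent p ≤ ∑ i, (p i - q i) * Real.log (p i) := by
  simp only [ent, ← sum_neg_distrib, ← sum_sub_distrib]
  refine sum_le_sum fun i _ => ?_
  linarith [sub_le_mul_log_sub_log (hp i) (hq i)]

lemma sum_sum_mul_add {ι κ R : Type*} [Fintype ι] [Fintype κ] [NonUnitalNonAssocSemiring R]
    (A : ι → κ → R) (f : ι → R) (g : κ → R) :
    ∑ i, ∑ j, A i j * (f i + g j) = ∑ i, (∑ j, A i j) * f i + ∑ j, (∑ i, A i j) * g j := by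
  simp only [mul_add, sum_add_distrib, sum_mul]
  rw [sum_comm (f := fun i j => A i j * g j)]

lemma frob_sub_left {n : ℕ} (P Q C : Fin n → Fin n → ℝ) :
    frob (P - Q) C = frob P C - frob Q C := by
  simp only [frob, Pi.sub_apply, sub_mul, sum_sub_distrib]

lemma frob_sub_add_eq_zero {n : ℕ} {P Q : Fin n → Fin n → ℝ}
    (hrow : ∀ i, ∑ j, Q i j = ∑ j, P i j) (hcol : ∀ j, ∑ i, Q i j = ∑ i, P i j)
    (f g : Fin n → ℝ) :
    frob (P - Q) (fun i j => f i + g j) = 0 := by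
  rw [frob_sub_left]
  simp only [frob, sum_sum_mul_add, hrow, hcol, sub_self]

theorem mul_sum_ent_sub_sum_ent_le_frob_sub_frob {n : ℕ} {C P Q : Fin n → Fin n → ℝ}
    {ν : ℝ} (hν : 0 < ν) {f g : Fin n → ℝ}
    (hP : ∀ i j, P i j = Real.exp ((f i + g j - C i j) / ν)) (hQ : ∀ i j, 0 ≤ Q i j)
    (hrow : ∀ i, ∑ j, Q i j = ∑ j, P i j) (hcol : ∀ j, ∑ i, Q i j = ∑ i, P i j) :
    ν * (∑ i, ent (Q i) - ∑ i, ent (P i)) ≤ frob Q C - frob P C := by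
  have hP_pos (i j : Fin n) : 0 < P i j := hP i j ▸ Real.exp_pos _
  have hlog (i j : Fin n) : ν * Real.log (P i j) = f i + g j - C i j := by
    rw [hP, Real.log_exp, mul_div_cancel₀ _ hν.ne']
  calc ν * (∑ i, ent (Q i) - ∑ i, ent (P i))
      ≤ ν * ∑ i, ∑ j, (P i j - Q i j) * Real.log (P i j) := by
        rw [← sum_sub_distrib]
        gcongr with i
        exact ent_sub_ent_le_sum_sub_mul_log (hP_pos i) (hQ i)
    _ = ∑ i, ∑ j, (P i j - Q i j) * (f i + g j - C i j) := by
        simp only [mul_sum, mul_left_comm ν, hlog]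
    _ = frob (P - Q) (fun i j => f i + g j) - frob (P - Q) C := by
        simp only [frob, Pi.sub_apply, mul_sub, sum_sub_distrib]
    _ = frob Q C - frob P C := by
        rw [frob_sub_add_eq_zero hrow hcol, frob_sub_left, zero_sub, neg_sub]

theorem sinkhorn_plan_minimizes_entropy_constrained_OT_general {n : ℕ}
    {C P Q : Fin n → Fin n → ℝ} {ν : ℝ} (hν : 0 < ν) {f g : Fin n → ℝ}
    (hP : ∀ i j, P i j = Real.exp ((f i + g j - C i j) / ν)) (hQ : ∀ i j, 0 ≤ Q i j)
    (hrow : ∀ i, ∑ j, Q i j = ∑ j, P i j) (hcol : ∀ j, ∑ i, Q i j = ∑ i, P i j)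
    (hent : ∑ i, ent (P i) ≤ ∑ i, ent (Q i)) :
    frob P C ≤ frob Q C :=
  sub_nonneg.1 <| (mul_nonneg hν.le (sub_nonneg.2 hent)).trans <|
    mul_sum_ent_sub_sum_ent_le_frob_sub_frob hν hP hQ hrow hcol

theorem sinkhorn_plan_minimizes_entropy_constrained_OT
    {n : ℕ} (hn : 2 ≤ n)
    (C : Fin n → Fin n → ℝ) (hCsym : ∀ i j, C i j = C j i)
    (hCnn : ∀ i j, 0 ≤ C i j) (hCzero : ∀ i j, C i j = 0 ↔ i = j)
    (ν : ℝ) (hν : 0 < ν) (f : Fin n → ℝ)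
    (P : Fin n → Fin n → ℝ)
    (hP : ∀ i j, P i j = Real.exp ((f i + f j - C i j) / ν))
    (hrow : ∀ i, ∑ j, P i j = 1) :
    (∀ i j, P i j = P j i) ∧
      ∀ Q : Fin n → Fin n → ℝ,
        (∀ i j, Q i j = Q j i) → (∀ i j, 0 ≤ Q i j) → (∀ i, ∑ j, Q i j = 1) →
        (∑ i, ent (P i)) ≤ ∑ i, ent (Q i) →
        frob P C ≤ frob Q C := by
  have hPsym (i j : Fin n) : P i j = P j i := by rw [hP, hP, hCsym i j, add_comm (f i)]
  exact ⟨hPsym, fun Q hQsym hQ hQrow =>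
    sinkhorn_plan_minimizes_entropy_constrained_OT_general hν hP hQ
      (fun i => by rw [hQrow, hrow]) (fun j => by simp only [hQsym _ j, hPsym _ j, hQrow, hrow])⟩
end
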